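/- Let $1 < p < \infty$ and $m, \beta \in \mathbb{R}$. There exist constants $C > 0$ and $\varepsilon_0 > 0$ such that for every $u \in W^{2,p}_{loc}((0,\infty))$ and every $0 < \varepsilon < \varepsilon_0$: $\|y^{\beta-1} u'\|_{L^p((0,\infty); y^m dy)} \le C\left(\varepsilon \|y^\beta u''\|_{L^p((0,\infty); y^m dy)} + \frac{1}{\varepsilon}\|y^{\beta-2} u\|_{L^p((0,\infty); y^m dy)}\right)$. -/

import Mathlib

open MeasureTheory Filter
open scoped ENNReal

/-- The weighted measure `y^m dy` on `(0,∞)`. -/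
noncomputable def wm (m : ℝ) : Measure ℝ :=
  (volume.restrict (Set.Ioi 0)).withDensity fun y => ENNReal.ofReal (y ^ m)

/-!
Taylor's formula with integral remainder on `[y, (1 + ε) y]` gives, for every `y > 0`,
`ε y |u'(y)| ≤ |u((1 + ε) y)| + |u(y)| + ε y² ∫_1^{1+ε} |u''(t y)| dt`.
Dividing by `ε y` and multiplying by `y^(β-1)`, every term on the right is a dilate
`y ↦ y^b v(l y)` with `1 ≤ l ≤ 1 + ε`, or an average of such dilates. Power weights are homogeneous,
so dilation by `l` only multiplies the weighted norm of `y^b v` by a power of `l`, which is bounded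
for bounded `ε`, and Minkowski's integral inequality handles the average. This replaces the dyadic
decomposition and covers all `1 ≤ p ≤ ∞`.
-/

section MinkowskiIntegral

variable {α β : Type*} [MeasurableSpace α] [MeasurableSpace β]
  {μ : Measure α} {ν : Measure β} {p : ℝ≥0∞}

lemma rpow_lintegral_le_measure_univ_rpow_mul {q : ℝ} (hq : 1 ≤ q) {f : β → ℝ≥0∞}
    (hf : AEMeasurable f ν) :
    (∫⁻ t, f t ∂ν) ^ q ≤ ν Set.univ ^ (q - 1) * ∫⁻ t, f t ^ q ∂ν := by
  have hq₀ : 0 < q := by linarith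
  have h := eLpNorm'_le_eLpNorm'_mul_rpow_measure_univ one_pos hq
    hf.aestronglyMeasurable
  simp only [eLpNorm', enorm_eq_self, ENNReal.rpow_one, div_one] at h
  calc (∫⁻ t, f t ∂ν) ^ q
      ≤ ((∫⁻ t, f t ^ q ∂ν) ^ (1 / q) * ν Set.univ ^ (1 - 1 / q)) ^ q := by gcongr
    _ = ν Set.univ ^ (q - 1) * ∫⁻ t, f t ^ q ∂ν := by
        rw [ENNReal.mul_rpow_of_nonneg _ _ hq₀.le, ← ENNReal.rpow_mul, ← ENNReal.rpow_mul,
          one_div_mul_cancel hq₀.ne', ENNReal.rpow_one, mul_comm, sub_mul,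
          one_div_mul_cancel hq₀.ne', one_mul]

lemma eLpNorm_lintegral_le_of_ae_eLpNorm_le [SFinite μ] [SFinite ν] (hp : 1 ≤ p)
    {F : α → β → ℝ≥0∞} (hF : Measurable (Function.uncurry F)) {C : ℝ≥0∞}
    (hC : ∀ᵐ t ∂ν, eLpNorm (F · t) p μ ≤ C) :
    eLpNorm (fun x ↦ ∫⁻ t, F x t ∂ν) p μ ≤ ν Set.univ * C := by
  obtain rfl | hp_top := eq_or_ne p ∞
  · have hle : ∀ᵐ t ∂ν, ∀ᵐ x ∂μ, F x t ≤ C := by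
      filter_upwards [hC] with t ht
      rw [eLpNorm_exponent_top] at ht
      filter_upwards [enorm_ae_le_eLpNormEssSup (F · t) μ] with x hx using hx.trans ht
    have hle' : ∀ᵐ x ∂μ, ∀ᵐ t ∂ν, F x t ≤ C :=
      (Measure.ae_ae_comm (p := fun x t ↦ F x t ≤ C) (measurableSet_le hF measurable_const)).2 hle
    rw [eLpNorm_exponent_top]
    refine eLpNormEssSup_le_of_ae_enorm_bound ?_
    filter_upwards [hle'] with x hx
    simpa [mul_comm] using lintegral_mono_ae hx
  · have hp₀ : p ≠ 0 := (one_pos.trans_le hp).ne'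
    have hq : 1 ≤ p.toReal := by simpa using ENNReal.toReal_mono hp_top hp
    have hq₀ : 0 < p.toReal := by linarith
    rw [eLpNorm_eq_lintegral_rpow_enorm_toReal hp₀ hp_top, one_div,
      ENNReal.rpow_inv_le_iff hq₀]
    simp only [enorm_eq_self]
    calc ∫⁻ x, (∫⁻ t, F x t ∂ν) ^ p.toReal ∂μ
        ≤ ∫⁻ x, ν Set.univ ^ (p.toReal - 1) * ∫⁻ t, F x t ^ p.toReal ∂ν ∂μ :=
          lintegral_mono fun x ↦
            rpow_lintegral_le_measure_univ_rpow_mul hq hF.of_uncurry_left.aemeasurable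
      _ = ν Set.univ ^ (p.toReal - 1) * ∫⁻ t, ∫⁻ x, F x t ^ p.toReal ∂μ ∂ν := by
          have hFq : Measurable fun z : α × β ↦ F z.1 z.2 ^ p.toReal := hF.pow_const _
          rw [lintegral_const_mul _ hFq.lintegral_prod_right',
            lintegral_lintegral_swap hFq.aemeasurable]
      _ ≤ ν Set.univ ^ (p.toReal - 1) * ∫⁻ _, C ^ p.toReal ∂ν := by
          refine mul_le_mul_right (lintegral_mono_ae ?_) _
          filter_upwards [hC] with t ht
          rwa [eLpNorm_eq_lintegral_rpow_enorm_toReal hp₀ hp_top, one_div,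
            ENNReal.rpow_inv_le_iff hq₀] at ht
      _ = (ν Set.univ * C) ^ p.toReal := by
          have hpow : ν Set.univ ^ p.toReal = ν Set.univ ^ (p.toReal - 1) * ν Set.univ := by
            simpa using ENNReal.rpow_add_of_nonneg (x := ν Set.univ) (p.toReal - 1) 1
              (by linarith) zero_le_one
          rw [lintegral_const, ENNReal.mul_rpow_of_nonneg _ _ hq₀.le, hpow, mul_right_comm,
            mul_assoc]

end MinkowskiIntegral

section Dilation

lemma ae_wm_pos (m : ℝ) : ∀ᵐ y ∂wm m, 0 < y :=
  (withDensity_absolutelyContinuous _ _).ae_le (ae_restrict_mem measurableSet_Ioi)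

lemma lintegral_wm (m : ℝ) {f : ℝ → ℝ≥0∞} (hf : Measurable f) :
    ∫⁻ y, f y ∂wm m = ∫⁻ y in Set.Ioi 0, ENNReal.ofReal (y ^ m) * f y :=
  lintegral_withDensity_eq_lintegral_mul _ (by fun_prop) hf

lemma setLIntegral_Ioi_comp_mul_left {l : ℝ} (hl : 0 < l) (f : ℝ → ℝ≥0∞) :
    ∫⁻ y in Set.Ioi 0, f (l * y) = ENNReal.ofReal l⁻¹ * ∫⁻ y in Set.Ioi 0, f y := by
  have hpre : (l * ·) ⁻¹' Set.Ioi (0 : ℝ) = Set.Ioi 0 := by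
    ext y; simp [hl]
  have hemb : MeasurableEmbedding (l * · : ℝ → ℝ) := measurableEmbedding_mulLeft₀ hl.ne'
  rw [← hpre, ← hemb.lintegral_map f, ← hemb.restrict_map, hpre,
    Real.map_volume_mul_left hl.ne', Measure.restrict_smul, lintegral_smul_measure,
    abs_of_pos (inv_pos.2 hl), smul_eq_mul]

lemma map_mul_left_wm (m : ℝ) {l : ℝ} (hl : 0 < l) :
    (wm m).map (l * ·) = ENNReal.ofReal (l ^ (-(m + 1))) • wm m := by
  refine Measure.ext_of_lintegral _ fun f hf ↦ ?_
  have hweight : ∀ y ∈ Set.Ioi (0 : ℝ), ENNReal.ofReal (y ^ m) * f (l * y) =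
      ENNReal.ofReal (l ^ (-m)) * (ENNReal.ofReal ((l * y) ^ m) * f (l * y)) := fun y hy ↦ by
    rw [← mul_assoc, ← ENNReal.ofReal_mul (by positivity), Real.mul_rpow hl.le (le_of_lt hy),
      ← mul_assoc, ← Real.rpow_add hl, neg_add_cancel, Real.rpow_zero, one_mul]
  calc ∫⁻ y, f y ∂(wm m).map (l * ·)
      = ∫⁻ y in Set.Ioi 0, ENNReal.ofReal (y ^ m) * f (l * y) := by
        rw [lintegral_map hf (by fun_prop), lintegral_wm m (by fun_prop)]
    _ = ENNReal.ofReal (l ^ (-m)) *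
          ∫⁻ y in Set.Ioi 0, ENNReal.ofReal ((l * y) ^ m) * f (l * y) := by
        rw [setLIntegral_congr_fun measurableSet_Ioi hweight, lintegral_const_mul _ (by fun_prop)]
    _ = ENNReal.ofReal (l ^ (-(m + 1))) * ∫⁻ y, f y ∂wm m := by
        rw [setLIntegral_Ioi_comp_mul_left hl fun y ↦ ENNReal.ofReal (y ^ m) * f y,
          ← mul_assoc, ← ENNReal.ofReal_mul (by positivity), ← Real.rpow_neg_one,
          ← Real.rpow_add hl, neg_add, lintegral_wm m hf]
    _ = _ := by rw [lintegral_smul_measure, smul_eq_mul]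

variable {E : Type*} [NormedAddCommGroup E]

lemma eLpNorm_comp_mul_left_wm (p : ℝ≥0∞) (m : ℝ) {l : ℝ} (hl : 0 < l) (g : ℝ → E) :
    eLpNorm (fun y ↦ g (l * y)) p (wm m) =
      ENNReal.ofReal (l ^ (-(m + 1) * (1 / p).toReal)) * eLpNorm g p (wm m) := by
  have hemb : MeasurableEmbedding (l * · : ℝ → ℝ) := measurableEmbedding_mulLeft₀ hl.ne'
  have hl₀ : ENNReal.ofReal (l ^ (-(m + 1))) ≠ 0 := by
    simpa using Real.rpow_pos_of_pos hl _
  calc eLpNorm (g ∘ (l * ·)) p (wm m)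
      = eLpNorm g p (ENNReal.ofReal (l ^ (-(m + 1))) • wm m) := by
        rw [← hemb.eLpNorm_map_measure, map_mul_left_wm m hl]
    _ = ENNReal.ofReal (l ^ (-(m + 1) * (1 / p).toReal)) * eLpNorm g p (wm m) := by
        rw [eLpNorm_smul_measure_of_ne_zero hl₀, smul_eq_mul,
          ENNReal.ofReal_rpow_of_pos (by positivity), ← Real.rpow_mul hl.le]

variable [NormedSpace ℝ E]

lemma eLpNorm_rpow_smul_comp_mul_left_wm (p : ℝ≥0∞) (m b : ℝ) {l : ℝ} (hl : 0 < l) (g : ℝ → E) :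
    eLpNorm (fun y ↦ y ^ b • g (l * y)) p (wm m) =
      ENNReal.ofReal (l ^ (-(b + (m + 1) * (1 / p).toReal))) *
        eLpNorm (fun y ↦ y ^ b • g y) p (wm m) := by
  have hweight : (fun y ↦ y ^ b • g (l * y)) =ᵐ[wm m]
      l ^ (-b) • fun y ↦ (l * y) ^ b • g (l * y) := by
    filter_upwards [ae_wm_pos m] with y hy
    rw [Pi.smul_apply, Real.mul_rpow hl.le hy.le, smul_smul, ← mul_assoc, ← Real.rpow_add hl,
      neg_add_cancel, Real.rpow_zero, one_mul]
  rw [eLpNorm_congr_ae hweight, eLpNorm_const_smul,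
    eLpNorm_comp_mul_left_wm p m hl fun y ↦ y ^ b • g y, Real.enorm_of_nonneg (by positivity),
    ← mul_assoc, ← ENNReal.ofReal_mul (by positivity), ← Real.rpow_add hl, neg_mul, ← neg_add]

lemma eLpNorm_rpow_smul_comp_mul_left_wm_le (p : ℝ≥0∞) (m b : ℝ) {l R : ℝ} (hl : 1 ≤ l)
    (hlR : l ≤ R) (g : ℝ → E) :
    eLpNorm (fun y ↦ y ^ b • g (l * y)) p (wm m) ≤
      ENNReal.ofReal (R ^ |b + (m + 1) * (1 / p).toReal|) *
        eLpNorm (fun y ↦ y ^ b • g y) p (wm m) := by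
  rw [eLpNorm_rpow_smul_comp_mul_left_wm p m b (one_pos.trans_le hl)]
  gcongr
  calc l ^ (-(b + (m + 1) * (1 / p).toReal))
      ≤ l ^ |b + (m + 1) * (1 / p).toReal| :=
        Real.rpow_le_rpow_of_exponent_le hl (neg_le_abs _)
    _ ≤ R ^ |b + (m + 1) * (1 / p).toReal| := by gcongr

end Dilation

section Taylor

variable {E : Type*} [NormedAddCommGroup E] [NormedSpace ℝ E] [CompleteSpace E]

lemma enorm_smul_deriv_le_add_lintegral {f f' f'' : ℝ → E} {a b : ℝ} (hab : a ≤ b)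
    (hf : ∀ t ∈ Set.Icc a b, HasDerivAt f (f' t) t)
    (hf' : ∀ t ∈ Set.Icc a b, HasDerivAt f' (f'' t) t) :
    ‖(b - a) • f' a‖ₑ ≤ ‖f b‖ₑ + ‖f a‖ₑ + ∫⁻ t in Set.Ioc a b, ‖(b - a) • f'' t‖ₑ := by
  have hderiv : ∀ t ∈ Set.Icc a b,
      HasDerivAt (fun t ↦ f t + (b - t) • f' t) ((b - t) • f'' t) t := fun t ht ↦ by
    simpa [Pi.add_def, Pi.smul_def'] using
      (hf t ht).add (((hasDerivAt_id t).const_sub b).smul (hf' t ht))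
  have hbound : ∫⁻ t in Set.Ioc a b, ‖(b - t) • f'' t‖ₑ ≤
      ∫⁻ t in Set.Ioc a b, ‖(b - a) • f'' t‖ₑ := by
    refine setLIntegral_mono' measurableSet_Ioc fun t ht ↦ ?_
    rw [enorm_smul, enorm_smul]
    gcongr ?_ * _
    rw [enorm_le_iff_norm_le, Real.norm_of_nonneg (by linarith [ht.2]),
      Real.norm_of_nonneg (by linarith)]
    linarith [ht.1]
  by_cases hfin : ∫⁻ t in Set.Ioc a b, ‖(b - t) • f'' t‖ₑ = ∞
  · simp [top_le_iff.1 (hfin ▸ hbound)]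
  have hmeas : AEStronglyMeasurable (fun t ↦ (b - t) • f'' t) (volume.restrict (Set.Ioc a b)) := by
    refine (aestronglyMeasurable_deriv (fun t ↦ f t + (b - t) • f' t) _).congr ?_
    filter_upwards [ae_restrict_mem measurableSet_Ioc] with t ht
      using (hderiv t (Set.Ioc_subset_Icc_self ht)).deriv
  have hftc : ∫ t in a..b, (b - t) • f'' t = f b - (f a + (b - a) • f' a) := by
    rw [intervalIntegral.integral_eq_sub_of_hasDerivAt (by rwa [Set.uIcc_of_le hab])
      ((intervalIntegrable_iff_integrableOn_Ioc_of_le hab).2 ⟨hmeas, lt_top_iff_ne_top.2 hfin⟩)]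
    simp
  calc ‖(b - a) • f' a‖ₑ
      = ‖f b - f a - ∫ t in Set.Ioc a b, (b - t) • f'' t‖ₑ := by
        rw [← intervalIntegral.integral_of_le hab, hftc]
        congr 1; abel
    _ ≤ ‖f b‖ₑ + ‖f a‖ₑ + ∫⁻ t in Set.Ioc a b, ‖(b - t) • f'' t‖ₑ :=
        enorm_sub_le.trans (add_le_add enorm_sub_le (enorm_integral_le_lintegral_enorm _))
    _ ≤ ‖f b‖ₑ + ‖f a‖ₑ + ∫⁻ t in Set.Ioc a b, ‖(b - a) • f'' t‖ₑ := by gcongr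

lemma enorm_rpow_smul_deriv_le (β : ℝ) {u u' u'' : ℝ → E}
    (hu : ∀ y, 0 < y → HasDerivAt u (u' y) y) (hu' : ∀ y, 0 < y → HasDerivAt u' (u'' y) y)
    {ε y : ℝ} (hε : 0 < ε) (hy : 0 < y) :
    ‖y ^ (β - 1) • u' y‖ₑ ≤
      ‖ε⁻¹ • y ^ (β - 2) • u ((1 + ε) * y)‖ₑ + ‖ε⁻¹ • y ^ (β - 2) • u y‖ₑ +
        ∫⁻ t in Set.Ioc 1 (1 + ε), ‖y ^ β • u'' (t * y)‖ₑ := by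
  have hpos : ∀ t ∈ Set.Icc 1 (1 + ε), 0 < t * y := fun t ht ↦
    mul_pos (one_pos.trans_le ht.1) hy
  have hderiv {v v' : ℝ → E} (hv : ∀ y, 0 < y → HasDerivAt v (v' y) y) (c : ℝ) :
      ∀ t ∈ Set.Icc 1 (1 + ε), HasDerivAt (fun t ↦ c • v (t * y)) ((c * y) • v' (t * y)) t := by
    intro t ht
    simpa [Function.comp_def, Pi.smul_def, smul_smul] using
      ((hv _ (hpos t ht)).scomp t ((hasDerivAt_id t).mul_const y)).const_smul c
  have h := enorm_smul_deriv_le_add_lintegral (by linarith : (1 : ℝ) ≤ 1 + ε)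
    (hderiv hu (ε⁻¹ * y ^ (β - 2))) (hderiv hu' (ε⁻¹ * y ^ (β - 2) * y))
  have hfst : ε * (ε⁻¹ * y ^ (β - 2) * y) = y ^ (β - 1) := by
    rw [mul_assoc, mul_inv_cancel_left₀ hε.ne', ← Real.rpow_add_one hy.ne']; ring_nf
  have hsnd : ε * (ε⁻¹ * y ^ (β - 2) * y * y) = y ^ β := by
    rw [← mul_assoc, hfst, ← Real.rpow_add_one hy.ne', sub_add_cancel]
  simpa only [add_sub_cancel_left, smul_smul, one_mul, hfst, hsnd] using h

end Taylor

section Interpolation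

variable {E : Type*} [NormedAddCommGroup E] [NormedSpace ℝ E] {p : ℝ≥0∞}

lemma aestronglyMeasurable_rpow_smul_comp_mul_left_wm {g : ℝ → E}
    (hg : ContinuousOn g (Set.Ioi 0)) (m b : ℝ) {l : ℝ} (hl : 0 < l) :
    AEStronglyMeasurable (fun y ↦ y ^ b • g (l * y)) (wm m) := by
  have hcont : ContinuousOn (fun y ↦ y ^ b • g (l * y)) (Set.Ioi 0) :=
    (continuousOn_id.rpow_const fun y hy ↦ Or.inl (ne_of_gt hy)).smul
      (hg.comp (by fun_prop) fun y hy ↦ mul_pos hl hy)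
  exact (hcont.aestronglyMeasurable measurableSet_Ioi).mono_ac
    (withDensity_absolutelyContinuous _ _)

lemma measurable_enorm_rpow_smul_comp_mul {g : ℝ → E} (hg : StronglyMeasurable g) (b : ℝ) :
    Measurable fun z : ℝ × ℝ ↦ ‖z.1 ^ b • g (z.2 * z.1)‖ₑ :=
  (StronglyMeasurable.smul (by fun_prop)
    (hg.comp_measurable (g := fun z : ℝ × ℝ ↦ z.2 * z.1) (by fun_prop))).enorm

lemma eLpNorm_lintegral_rpow_smul_comp_mul_right_wm_le (hp : 1 ≤ p) (m b : ℝ) {ε R : ℝ}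
    (hR : 1 + ε ≤ R) {g : ℝ → E} (hg : StronglyMeasurable g) :
    eLpNorm (fun y ↦ ∫⁻ t in Set.Ioc 1 (1 + ε), ‖y ^ b • g (t * y)‖ₑ) p (wm m) ≤
      ENNReal.ofReal ε * (ENNReal.ofReal (R ^ |b + (m + 1) * (1 / p).toReal|) *
        eLpNorm (fun y ↦ y ^ b • g y) p (wm m)) := by
  have : SFinite (wm m) := by unfold wm; infer_instance
  have hmeas := measurable_enorm_rpow_smul_comp_mul hg b
  refine (eLpNorm_lintegral_le_of_ae_eLpNorm_le hp hmeas ?_).trans_eq (congrArg (· * _) (by simp))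
  filter_upwards [ae_restrict_mem measurableSet_Ioc] with t ht
  rw [eLpNorm_enorm]
  exact eLpNorm_rpow_smul_comp_mul_left_wm_le p m b ht.1.le (ht.2.trans hR) g

variable [CompleteSpace E]

lemma eLpNorm_rpow_smul_deriv_wm_le (hp : 1 ≤ p) (m β : ℝ) {ε R : ℝ} (hε : 0 < ε)
    (hR : 1 + ε ≤ R) {u u' u'' : ℝ → E} (hu : ∀ y, 0 < y → HasDerivAt u (u' y) y)
    (hu' : ∀ y, 0 < y → HasDerivAt u' (u'' y) y) :
    eLpNorm (fun y ↦ y ^ (β - 1) • u' y) p (wm m) ≤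
      ENNReal.ofReal ε⁻¹ * (ENNReal.ofReal (R ^ |β - 2 + (m + 1) * (1 / p).toReal|) *
          eLpNorm (fun y ↦ y ^ (β - 2) • u y) p (wm m)) +
        ENNReal.ofReal ε⁻¹ * eLpNorm (fun y ↦ y ^ (β - 2) • u y) p (wm m) +
        ENNReal.ofReal ε * (ENNReal.ofReal (R ^ |β + (m + 1) * (1 / p).toReal|) *
          eLpNorm (fun y ↦ y ^ β • u'' y) p (wm m)) := by
  have hu'' : (fun y ↦ y ^ β • u'' y) =ᵐ[wm m] fun y ↦ y ^ β • deriv u' y := by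
    filter_upwards [ae_wm_pos m] with y hy
    rw [(hu' y hy).deriv]
  let shifted : ℝ → E := ε⁻¹ • fun y ↦ y ^ (β - 2) • u ((1 + ε) * y)
  let unshifted : ℝ → E := ε⁻¹ • fun y ↦ y ^ (β - 2) • u y
  let averaged : ℝ → ℝ≥0∞ := fun y ↦ ∫⁻ t in Set.Ioc 1 (1 + ε), ‖y ^ β • deriv u' (t * y)‖ₑ
  have hpointwise : ∀ᵐ y ∂wm m,
      ‖y ^ (β - 1) • u' y‖ₑ ≤ ‖shifted y‖ₑ + ‖unshifted y‖ₑ + averaged y := by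
    filter_upwards [ae_wm_pos m] with y hy
    exact enorm_rpow_smul_deriv_le β hu
      (fun y hy ↦ (hu' y hy).differentiableAt.hasDerivAt) hε hy
  have hcont : ContinuousOn u (Set.Ioi 0) := fun y hy ↦ (hu y hy).continuousAt.continuousWithinAt
  have hshifted : AEStronglyMeasurable shifted (wm m) :=
    (aestronglyMeasurable_rpow_smul_comp_mul_left_wm hcont m _ (by positivity)).const_smul _
  have hunshifted : AEStronglyMeasurable unshifted (wm m) := by
    simpa only [one_mul] using
      (aestronglyMeasurable_rpow_smul_comp_mul_left_wm hcont m (β - 2) one_pos).const_smul ε⁻¹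
  have haveraged : Measurable averaged :=
    (measurable_enorm_rpow_smul_comp_mul (stronglyMeasurable_deriv u') β).lintegral_prod_right'
  calc eLpNorm (fun y ↦ y ^ (β - 1) • u' y) p (wm m)
      ≤ eLpNorm ((fun y ↦ ‖shifted y‖ₑ) + (fun y ↦ ‖unshifted y‖ₑ) + averaged) p (wm m) :=
        eLpNorm_mono_enorm_ae hpointwise
    _ ≤ eLpNorm shifted p (wm m) + eLpNorm unshifted p (wm m) + eLpNorm averaged p (wm m) := by
        grw [eLpNorm_add_le (hshifted.enorm.add hunshifted.enorm).aestronglyMeasurable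
            haveraged.aestronglyMeasurable hp,
          eLpNorm_add_le hshifted.enorm.aestronglyMeasurable
            hunshifted.enorm.aestronglyMeasurable hp,
          eLpNorm_enorm, eLpNorm_enorm]
    _ ≤ _ := by
        rw [eLpNorm_const_smul, eLpNorm_const_smul, Real.enorm_of_nonneg (by positivity),
          eLpNorm_congr_ae hu'']
        gcongr
        · exact eLpNorm_rpow_smul_comp_mul_left_wm_le p m _ (by linarith) hR u
        · exact eLpNorm_lintegral_rpow_smul_comp_mul_right_wm_le hp m β hR
            (stronglyMeasurable_deriv u')

theorem stmt10_general (hp : 1 ≤ p) (m β : ℝ) {ε₀ : ℝ} (hε₀ : 0 < ε₀) :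
    ∃ C > (0 : ℝ), ∀ u u' u'' : ℝ → E,
      (∀ y, 0 < y → HasDerivAt u (u' y) y) →
      (∀ y, 0 < y → HasDerivAt u' (u'' y) y) →
      ∀ ε : ℝ, 0 < ε → ε < ε₀ →
        eLpNorm (fun y ↦ y ^ (β - 1) • u' y) p (wm m) ≤
          ENNReal.ofReal C *
            (ENNReal.ofReal ε * eLpNorm (fun y ↦ y ^ β • u'' y) p (wm m)
              + ENNReal.ofReal (1 / ε) * eLpNorm (fun y ↦ y ^ (β - 2) • u y) p (wm m)) := by
  refine ⟨(1 + ε₀) ^ |β - 2 + (m + 1) * (1 / p).toReal| + 1 +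
    (1 + ε₀) ^ |β + (m + 1) * (1 / p).toReal|, by positivity, fun u u' u'' hu hu' ε hε hεε₀ ↦ ?_⟩
  have hR : 1 + ε ≤ 1 + ε₀ := by linarith
  refine (eLpNorm_rpow_smul_deriv_wm_le hp m β hε hR hu hu').trans ?_
  rw [ENNReal.ofReal_add (by positivity) (by positivity),
    ENNReal.ofReal_add (by positivity) (by positivity), ENNReal.ofReal_one, one_div ε]
  set K := ENNReal.ofReal ((1 + ε₀) ^ |β - 2 + (m + 1) * (1 / p).toReal|)
  set L := ENNReal.ofReal ((1 + ε₀) ^ |β + (m + 1) * (1 / p).toReal|)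
  set N₀ := ENNReal.ofReal ε⁻¹ * eLpNorm (fun y ↦ y ^ (β - 2) • u y) p (wm m)
  set N₂ := ENNReal.ofReal ε * eLpNorm (fun y ↦ y ^ β • u'' y) p (wm m)
  rw [mul_left_comm, mul_left_comm (ENNReal.ofReal ε)]
  calc K * N₀ + N₀ + L * N₂
      ≤ K * N₀ + N₀ + L * N₂ + ((K + 1) * N₂ + L * N₀) := le_self_add
    _ = (K + 1 + L) * (N₂ + N₀) := by ring

end Interpolation

/-- Weighted interpolation inequality:
`‖y^{β-1} u'‖ ≤ C (ε ‖y^β u''‖ + ε⁻¹ ‖y^{β-2} u‖)` for `0 < ε < ε₀`. -/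
theorem stmt10 (p m β : ℝ) (hp : 1 < p) :
    ∃ C > (0 : ℝ), ∃ ε₀ > (0 : ℝ), ∀ u u' u'' : ℝ → ℝ,
      (∀ y, 0 < y → HasDerivAt u (u' y) y) →
      (∀ y, 0 < y → HasDerivAt u' (u'' y) y) →
      ∀ ε : ℝ, 0 < ε → ε < ε₀ →
        eLpNorm (fun y => y ^ (β - 1) * u' y) (ENNReal.ofReal p) (wm m) ≤
          ENNReal.ofReal C *
            (ENNReal.ofReal ε *
                eLpNorm (fun y => y ^ β * u'' y) (ENNReal.ofReal p) (wm m)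
              + ENNReal.ofReal (1 / ε) *
                eLpNorm (fun y => y ^ (β - 2) * u y) (ENNReal.ofReal p) (wm m)) := by
  obtain ⟨C, hC, hinterp⟩ := stmt10_general (E := ℝ) (ENNReal.one_le_ofReal.2 hp.le) m β one_pos
  exact ⟨C, hC, 1, one_pos, hinterp⟩
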